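/- Let x = (x₁,x₂) with irrational slope ξ = x₁/x₂, |ξ| < 1, |x| = |x₂|, and y = (y₁,y₂) with irrational slope y = y₁/y₂, |y| ≤ 1, |y| = |y₂|. Let t_j/s_j be the convergents of y. For all positive integers j and k there exists γ ∈ SL(2,ℤ) of the form N_j U^ℓ M_k such that | (|y₂|/|x₂|) q_{k−1} q_k − s_j q_k | − 4 s_j q_{k−1} ≤ |γ| ≤ 2(|y₂|/|x₂|) q_{k−1} q_k + 4 s_j q_k and |γx − y| ≤ 2|y₂|/(s_j s_{j+1}) + 5|x₂| s_j / q_k. -/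

import Mathlib

open Matrix MeasureTheory

/-- Denominator `q k` of the `k`-th convergent of the continued fraction of `ξ`. -/
noncomputable def qden (ξ : ℝ) (k : ℕ) : ℝ := (GenContFract.of ξ).dens k

/-- Numerator `p k` of the `k`-th convergent of the continued fraction of `ξ`. -/
noncomputable def pnum (ξ : ℝ) (k : ℕ) : ℝ := (GenContFract.of ξ).nums k

/-- Action of an integer matrix on `ℝ²` by left multiplication. -/
noncomputable def act (g : Matrix (Fin 2) (Fin 2) ℤ) (x : Fin 2 → ℝ) : Fin 2 → ℝ :=
  (g.map (Int.cast : ℤ → ℝ)).mulVec x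

/-- Sup norm of an integer `2 × 2` matrix. -/
noncomputable def mnorm (g : Matrix (Fin 2) (Fin 2) ℤ) : ℝ :=
  max (max |(g 0 0 : ℝ)| |(g 0 1 : ℝ)|) (max |(g 1 0 : ℝ)| |(g 1 1 : ℝ)|)

/-- Sup norm on `ℝ²`. -/
noncomputable def vnorm (v : Fin 2 → ℝ) : ℝ := max |v 0| |v 1|

/-- The set of exponents `w` such that `|v α + u| ≤ |v| ^ (-w)` has infinitely many
integer solutions `(v, u)`; its supremum is the irrationality measure `ω(α)`. -/
def omegaSet (α : ℝ) : Set ℝ :=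
  {w : ℝ | {p : ℤ × ℤ | |(p.1 : ℝ) * α + (p.2 : ℝ)| ≤ |(p.1 : ℝ)| ^ (-w)}.Infinite}

/-- The set of exponents `μ` such that `|γ x - y| ≤ |γ| ^ (-μ)` for infinitely many
`γ ∈ SL(2, ℤ)`; its supremum is `μ(x, y)`. -/
def muSet (x y : Fin 2 → ℝ) : Set ℝ :=
  {μ : ℝ | {γ : Matrix (Fin 2) (Fin 2) ℤ |
    γ.det = 1 ∧ vnorm (act γ x - y) ≤ mnorm γ ^ (-μ)}.Infinite}

/-- The set of exponents `μ` such that for all sufficiently large `T` there is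
`γ ∈ SL(2, ℤ)` with `|γ| ≤ T` and `|γ x - y| ≤ T ^ (-μ)`; its supremum is `μ̂(x, y)`. -/
def muHatSet (x y : Fin 2 → ℝ) : Set ℝ :=
  {μ : ℝ | ∃ T₀ : ℝ, ∀ T : ℝ, T₀ ≤ T → ∃ γ : Matrix (Fin 2) (Fin 2) ℤ,
    γ.det = 1 ∧ mnorm γ ≤ T ∧ vnorm (act γ x - y) ≤ T ^ (-μ)}

/-!
Write `N = N_j`, `M = M_k`, `γ = N U^ℓ M` and let `e` be the second coordinate of `M x`, so that
`|x₂| / (q_k + q_{k-1}) ≤ |e| ≤ |x₂| / q_k`. Raising `ℓ` by one adds `s_j e` to the second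
coordinate of `γ x`; rounding brings this coordinate within `s_j |e| / 2` of `y₂`. Since
`det (N U^ℓ) = 1`, `s_j` times the first row of `γ` is `t_j` times its second row minus the second
row of `M`. Hence `γ x` lies close to the line of slope `t_j / s_j`, which is close to the line
through `y`, and the norm of `γ` is governed by its second row. That row is found by solving two
linear equations: its value on `x` is about `y₂`, and its cross-determinant with the second row of
`M` is `s_j`.
-/

section ConvergentError

open GenContFract (of)

variable {K : Type*} [Field K] [LinearOrder K] [IsStrictOrderedRing K] [FloorRing K]

/-- The signed distance `(-1) ^ n * (q_n v - p_n)` between `q_n v` and `p_n`, where `p_n / q_n` is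
the `n`-th convergent of `v`. Convergents alternate around `v`, so it equals `|q_n v - p_n|`, and
carrying the sign keeps it linear in `p_n` and `q_n`. -/
noncomputable def convError (v : K) (n : ℕ) : K :=
  (-1) ^ n * ((of v).dens n * v - (of v).nums n)

variable {v : K} {n : ℕ}

lemma one_le_dens : 1 ≤ (of v).dens n := by
  have hmono : Monotone (of v).dens := monotone_nat_of_le_succ fun _ => GenContFract.of_den_mono
  exact GenContFract.zeroth_den_eq_one.symm.trans_le (hmono n.zero_le)

lemma convError_eq_mul_sub_convs :
    convError v n = (of v).dens n * ((-1) ^ n * (v - (of v).convs n)) := by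
  have hdens : (of v).dens n ≠ 0 := (zero_lt_one.trans_le one_le_dens).ne'
  rw [convError, GenContFract.conv_eq_num_div_den]
  field_simp

lemma convError_eq_zero_of_terminatedAt (h : (of v).TerminatedAt n) : convError v n = 0 := by
  rw [convError_eq_mul_sub_convs, ← GenContFract.of_correctness_of_terminatedAt h]
  simp

lemma convError_nonneg : 0 ≤ convError v n := by
  by_cases hterm : (of v).TerminatedAt n
  · exact (convError_eq_zero_of_terminatedAt hterm).ge
  obtain ⟨_, hsucc⟩ := Option.ne_none_iff_exists'.1
    (mt GenContFract.of_terminatedAt_n_iff_succ_nth_intFractPair_stream_eq_none.2 hterm)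
  obtain ⟨ifp, hifp, -, -⟩ := GenContFract.IntFractPair.succ_nth_stream_eq_some_iff.1 hsucc
  have hfr : 0 ≤ ifp.fr := GenContFract.IntFractPair.nth_stream_fr_nonneg hifp
  have hcur : 0 ≤ ((of v).contsAux (n + 1)).b := GenContFract.zero_le_of_contsAux_b
  have hpred : 0 ≤ ((of v).contsAux n).b := GenContFract.zero_le_of_contsAux_b
  rw [convError_eq_mul_sub_convs, GenContFract.sub_convs_eq hifp]
  refine mul_nonneg GenContFract.zero_le_of_den ?_
  split_ifs
  · simp
  · rw [← mul_div_assoc, ← mul_pow, neg_one_mul, neg_neg, one_pow]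
    positivity

lemma abs_dens_mul_sub_nums : |(of v).dens n * v - (of v).nums n| = convError v n := by
  rw [← abs_of_nonneg (convError_nonneg (v := v)), convError, abs_mul, abs_neg_one_pow, one_mul]

omit [IsStrictOrderedRing K] in
lemma convError_succ_succ {gp : GenContFract.Pair K} (h : (of v).s.get? (n + 1) = some gp) :
    convError v (n + 2) = convError v n - gp.b * convError v (n + 1) := by
  have ha : gp.a = 1 := (GenContFract.of_partNum_eq_one_and_exists_int_partDen_eq h).1
  simp only [convError, GenContFract.nums_recurrence h rfl rfl,
    GenContFract.dens_recurrence h rfl rfl, ha]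
  ring

lemma convError_antitone : Antitone (convError v) := by
  refine antitone_nat_of_succ_le fun n => ?_
  by_cases hterm : (of v).TerminatedAt (n + 1)
  · exact (convError_eq_zero_of_terminatedAt hterm).trans_le convError_nonneg
  obtain ⟨gp, hgp⟩ := Option.ne_none_iff_exists'.1 hterm
  have hb : 1 ≤ gp.b := GenContFract.of_one_le_get?_partDen (GenContFract.partDen_eq_s_b hgp)
  calc convError v (n + 1) ≤ gp.b * convError v (n + 1) := le_mul_of_one_le_left convError_nonneg hb
    _ = convError v n - convError v (n + 2) := by rw [convError_succ_succ hgp]; ring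
    _ ≤ convError v n := sub_le_self _ convError_nonneg

lemma convError_lt_one : convError v n < 1 :=
  calc convError v n ≤ convError v 0 := convError_antitone (Nat.zero_le n)
    _ = Int.fract v := by
      simp [convError, GenContFract.zeroth_num_eq_h, GenContFract.of_h_eq_floor, Int.self_sub_floor]
    _ < 1 := Int.fract_lt_one v

lemma nums_mul_dens_sub (h : ¬(of v).TerminatedAt n) :
    (of v).nums (n + 1) * (of v).dens n - (of v).nums n * (of v).dens (n + 1) = (-1) ^ n := by
  have hdet : (of v).nums n * (of v).dens (n + 1) - (of v).dens n * (of v).nums (n + 1) =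
    (-1) ^ (n + 1) := SimpContFract.determinant (s := SimpContFract.of v) h
  linear_combination -hdet

lemma dens_mul_convError_add (h : ¬(of v).TerminatedAt n) :
    (of v).dens (n + 1) * convError v n + (of v).dens n * convError v (n + 1) = 1 := by
  have hsign : (-1 : K) ^ n * (-1) ^ n = 1 := by rw [← mul_pow]; simp
  simp only [convError, pow_succ]
  linear_combination (-1) ^ n * nums_mul_dens_sub h + hsign

lemma dens_succ_mul_convError_le_one : (of v).dens (n + 1) * convError v n ≤ 1 := by
  by_cases hterm : (of v).TerminatedAt n
  · simp [convError_eq_zero_of_terminatedAt hterm]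
  · rw [← dens_mul_convError_add hterm]
    exact le_add_of_nonneg_right (mul_nonneg GenContFract.zero_le_of_den convError_nonneg)

lemma one_le_dens_add_mul_convError (h : ¬(of v).TerminatedAt n) :
    1 ≤ ((of v).dens (n + 1) + (of v).dens n) * convError v n := by
  rw [← dens_mul_convError_add h, add_mul]
  gcongr
  · exact GenContFract.zero_le_of_den
  · exact convError_antitone n.le_succ

end ConvergentError

section ConvergentMatrix

open GenContFract (of)

/-- The matrix with columns `(p_{n+1}, q_{n+1})` and `(-1) ^ n • (p_n, q_n)`, the `N_{n+1}` of the
paper; the sign of the second column makes the determinant `1` for convergents. -/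
def convMatrix (p q : ℕ → ℤ) (n : ℕ) : Matrix (Fin 2) (Fin 2) ℤ :=
  !![p (n + 1), (-1) ^ n * p n; q (n + 1), (-1) ^ n * q n]

/-- The matrix with rows `(q_{n+1}, -p_{n+1})` and `(-1) ^ n • (q_n, -p_n)`, the `M_{n+1}` of the
paper. It sends `(v, 1)` to a vector whose entries are up to sign the errors of two consecutive
convergents of `v`. -/
def convErrorMatrix (p q : ℕ → ℤ) (n : ℕ) : Matrix (Fin 2) (Fin 2) ℤ :=
  !![q (n + 1), -p (n + 1); (-1) ^ n * q n, -((-1) ^ n * p n)]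

lemma convErrorMatrix_eq_ite (p q : ℕ → ℤ) (n : ℕ) :
    convErrorMatrix p q n = if Even (n + 1) then !![q (n + 1), -p (n + 1); -q n, p n]
      else !![q (n + 1), -p (n + 1); q n, -p n] := by
  rcases n.even_or_odd with hn | hn
  · simp [convErrorMatrix, Nat.even_add_one, hn, hn.neg_one_pow]
  · simp [convErrorMatrix, hn.add_one, hn.neg_one_pow]

variable {K : Type*} [Field K] [LinearOrder K] [IsStrictOrderedRing K] [FloorRing K] {v : K}
  {p q : ℕ → ℤ} {n : ℕ}

lemma det_convMatrix (hp : ∀ n, (p n : K) = (of v).nums n) (hq : ∀ n, (q n : K) = (of v).dens n)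
    (hv : ¬(of v).TerminatedAt n) : (convMatrix p q n).det = 1 := by
  have hdet : p (n + 1) * q n - p n * q (n + 1) = (-1) ^ n := by
    have hdet := nums_mul_dens_sub hv
    rw [← hp, ← hp, ← hq, ← hq] at hdet
    exact_mod_cast hdet
  have hsign : (-1 : ℤ) ^ n * (-1) ^ n = 1 := by rw [← mul_pow]; simp
  rw [convMatrix, Matrix.det_fin_two_of]
  linear_combination (-1) ^ n * hdet + hsign

lemma det_convErrorMatrix (hp : ∀ n, (p n : K) = (of v).nums n)
    (hq : ∀ n, (q n : K) = (of v).dens n) (hv : ¬(of v).TerminatedAt n) :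
    (convErrorMatrix p q n).det = 1 := by
  rw [← det_convMatrix hp hq hv, convErrorMatrix, convMatrix, Matrix.det_fin_two_of,
    Matrix.det_fin_two_of]
  ring

lemma one_le_den (hq : ∀ n, (q n : K) = (of v).dens n) : 1 ≤ q n := by
  have hdens : 1 ≤ (of v).dens n := one_le_dens
  rw [← hq] at hdens
  exact_mod_cast hdens

lemma den_le_succ (hq : ∀ n, (q n : K) = (of v).dens n) : q n ≤ q (n + 1) := by
  have hdens : (of v).dens n ≤ (of v).dens (n + 1) := GenContFract.of_den_mono
  rw [← hq, ← hq] at hdens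
  exact_mod_cast hdens

lemma abs_num_le_den (hp : ∀ n, (p n : K) = (of v).nums n) (hq : ∀ n, (q n : K) = (of v).dens n)
    (hv : |v| ≤ 1) : |p n| ≤ q n := by
  have herror : |q n * v - p n| < 1 := by
    rw [hp, hq, abs_dens_mul_sub_nums]
    exact convError_lt_one
  have hlt : |(p n : K)| < q n + 1 := by
    have hqn : (0 : K) ≤ q n := by exact_mod_cast zero_le_one.trans (one_le_den hq)
    calc |(p n : K)| ≤ |q n * v| + |q n * v - p n| := by
          simpa only [sub_sub_cancel] using abs_sub (q n * v : K) (q n * v - p n)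
      _ = q n * |v| + |q n * v - p n| := by rw [abs_mul, abs_of_nonneg hqn]
      _ < q n + 1 := add_lt_add_of_le_of_lt (mul_le_of_le_one_right hqn hv) herror
  exact Int.lt_add_one_iff.1 (by exact_mod_cast hlt)

end ConvergentMatrix

section ShearProduct

/-- The product `N * U ^ ℓ * M`, where `U` is the standard upper triangular unipotent matrix. -/
def shearProduct {R : Type*} [CommRing R] (N : Matrix (Fin 2) (Fin 2) R) (ℓ : R)
    (M : Matrix (Fin 2) (Fin 2) R) : Matrix (Fin 2) (Fin 2) R :=
  N * !![1, ℓ; 0, 1] * M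

section CommRing

variable {R : Type*} [CommRing R] {N M : Matrix (Fin 2) (Fin 2) R} {ℓ : R}

lemma shearProduct_apply (i j : Fin 2) :
    shearProduct N ℓ M i j = N i 0 * M 0 j + (N i 0 * ℓ + N i 1) * M 1 j := by
  fin_cases i <;> simp [shearProduct, Matrix.mul_apply, Fin.sum_univ_two]

lemma mul_shearProduct_zero (hN : N.det = 1) (j : Fin 2) :
    N 1 0 * shearProduct N ℓ M 0 j = N 0 0 * shearProduct N ℓ M 1 j - M 1 j := by
  rw [Matrix.det_fin_two] at hN
  rw [shearProduct_apply, shearProduct_apply]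
  linear_combination -M 1 j * hN

lemma shearProduct_one_mul_sub (hM : M.det = 1) :
    shearProduct N ℓ M 1 0 * M 1 1 - shearProduct N ℓ M 1 1 * M 1 0 = N 1 0 := by
  rw [Matrix.det_fin_two] at hM
  rw [shearProduct_apply, shearProduct_apply]
  linear_combination N 1 0 * hM

end CommRing

lemma act_apply (g : Matrix (Fin 2) (Fin 2) ℤ) (x : Fin 2 → ℝ) (i : Fin 2) :
    act g x i = g i 0 * x 0 + g i 1 * x 1 := by
  simp [act, Matrix.mulVec, Matrix.vec2_dotProduct]

variable {N M : Matrix (Fin 2) (Fin 2) ℤ} {ℓ : ℤ} {x y : Fin 2 → ℝ} {δ ρ q Q w : ℝ}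

lemma mul_act_shearProduct_zero (hN : N.det = 1) :
    N 1 0 * act (shearProduct N ℓ M) x 0 = N 0 0 * act (shearProduct N ℓ M) x 1 - act M x 1 := by
  have hrow (j : Fin 2) : (N 1 0 * shearProduct N ℓ M 0 j : ℝ) =
      N 0 0 * shearProduct N ℓ M 1 j - M 1 j := by exact_mod_cast mul_shearProduct_zero hN j
  simp only [act_apply]
  linear_combination x 0 * hrow 0 + x 1 * hrow 1

lemma act_shearProduct_one :
    act (shearProduct N ℓ M) x 1 =
      act (shearProduct N 0 M) x 1 + ℓ * N 1 0 * act M x 1 := by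
  simp only [act_apply, shearProduct_apply]
  push_cast
  ring

lemma exists_int_abs_add_mul_le {s : ℝ} (hs : 0 < s) (u : ℝ) : ∃ ℓ : ℤ, |u + ℓ * s| ≤ s / 2 := by
  refine ⟨-round (u / s), ?_⟩
  calc |u + (-round (u / s) : ℤ) * s| = |u / s - round (u / s)| * s := by
        rw [← abs_of_pos hs, ← abs_mul, abs_of_pos hs, sub_mul, div_mul_cancel₀ _ hs.ne']
        push_cast
        ring_nf
    _ ≤ 1 / 2 * s := by gcongr; exact abs_sub_round _
    _ = s / 2 := by ring

lemma exists_act_shearProduct_one_eq (hs : 0 < N 1 0) (hE : act M x 1 ≠ 0) (w : ℝ) :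
    ∃ (ℓ : ℤ) (δ : ℝ), |δ| ≤ N 1 0 / 2 ∧ act (shearProduct N ℓ M) x 1 = w + δ * act M x 1 := by
  obtain ⟨ℓ, hℓ⟩ := exists_int_abs_add_mul_le (Int.cast_pos.2 hs)
    ((act (shearProduct N 0 M) x 1 - w) / act M x 1)
  refine ⟨ℓ, _, hℓ, ?_⟩
  rw [act_shearProduct_one, add_mul, div_mul_cancel₀ _ hE]
  ring

lemma shearProduct_one_zero_sub_mul_act (hM : M.det = 1)
    (hw : act (shearProduct N ℓ M) x 1 = w + δ * act M x 1) :
    (shearProduct N ℓ M 1 0 - M 1 0 * δ) * act M x 1 = N 1 0 * x 1 + M 1 0 * w := by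
  have hdet : (shearProduct N ℓ M 1 0 * M 1 1 - shearProduct N ℓ M 1 1 * M 1 0 : ℝ) = N 1 0 := by
    exact_mod_cast shearProduct_one_mul_sub hM
  simp only [act_apply] at hw ⊢
  linear_combination x 1 * hdet + M 1 0 * hw

lemma shearProduct_one_one_sub_mul_act (hM : M.det = 1)
    (hw : act (shearProduct N ℓ M) x 1 = w + δ * act M x 1) :
    (shearProduct N ℓ M 1 1 - M 1 1 * δ) * act M x 1 = M 1 1 * w - N 1 0 * x 0 := by
  have hdet : (shearProduct N ℓ M 1 0 * M 1 1 - shearProduct N ℓ M 1 1 * M 1 0 : ℝ) = N 1 0 := by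
    exact_mod_cast shearProduct_one_mul_sub hM
  simp only [act_apply] at hw ⊢
  linear_combination -x 0 * hdet + M 1 1 * hw

lemma abs_le_of_sub_mul_eq {A B E X b c : ℝ} (hX : X ≠ 0) (hQ0 : 0 ≤ Q) (hQ : |X| ≤ Q * |E|)
    (h : (c - b) * E = A) (hA : |A| ≤ B * |X|) : |c| ≤ Q * B + |b| := by
  have hsub : |c - b| * |X| ≤ Q * B * |X| := by
    calc |c - b| * |X| ≤ |c - b| * (Q * |E|) := by gcongr
      _ = Q * |A| := by rw [← h, abs_mul]; ring
      _ ≤ Q * (B * |X|) := by gcongr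
      _ = Q * B * |X| := by ring
  linarith [abs_sub_abs_le_abs_sub c b, le_of_mul_le_mul_right hsub (abs_pos.2 hX)]

lemma sub_le_abs_of_sub_mul_eq {A B E X b c : ℝ} (hX : X ≠ 0) (hq0 : 0 ≤ q) (hq : q * |E| ≤ |X|)
    (h : (c - b) * E = A) (hA : B * |X| ≤ |A|) : q * B - |b| ≤ |c| := by
  have hsub : q * B * |X| ≤ |c - b| * |X| := by
    calc q * B * |X| = q * (B * |X|) := by ring
      _ ≤ q * |A| := by gcongr
      _ = |c - b| * (q * |E|) := by rw [← h, abs_mul]; ring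
      _ ≤ |c - b| * |X| := by gcongr
  linarith [abs_sub c b, le_of_mul_le_mul_right hsub (abs_pos.2 hX)]

lemma sub_le_abs_shearProduct_one_zero (hM : M.det = 1) (hs : 0 ≤ N 1 0) (hx1 : x 1 ≠ 0)
    (hq0 : 0 ≤ q) (hq : q * |act M x 1| ≤ |x 1|) (hρ : |w| = ρ * |x 1|)
    (hw : act (shearProduct N ℓ M) x 1 = w + δ * act M x 1) :
    q * |(|M 1 0| * ρ - N 1 0)| - |M 1 0| * |δ| ≤ |(shearProduct N ℓ M 1 0 : ℤ)| := by
  have hsR : (0 : ℝ) ≤ N 1 0 := by exact_mod_cast hs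
  push_cast
  rw [← abs_mul]
  refine sub_le_abs_of_sub_mul_eq hx1 hq0 hq (shearProduct_one_zero_sub_mul_act hM hw) ?_
  calc |(|(M 1 0 : ℝ)| * ρ - N 1 0)| * |x 1|
      = |(|M 1 0 * w| - |(-(N 1 0 * x 1) : ℝ)|)| := by
        rw [abs_neg, abs_mul, abs_mul, abs_of_nonneg hsR, hρ, ← mul_assoc, ← sub_mul, abs_mul,
          abs_abs]
    _ ≤ |M 1 0 * w - -(N 1 0 * x 1)| := abs_abs_sub_abs_le _ _
    _ = |N 1 0 * x 1 + M 1 0 * w| := by rw [sub_neg_eq_add, add_comm]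

lemma abs_shearProduct_one_le (hM : M.det = 1) (hs : 0 ≤ N 1 0) (hx1 : x 1 ≠ 0)
    (hx : |x 0| ≤ |x 1|) (hM1 : |M 1 1| ≤ |M 1 0|) (hQ0 : 0 ≤ Q) (hQ : |x 1| ≤ Q * |act M x 1|)
    (hρ : |w| = ρ * |x 1|) (hw : act (shearProduct N ℓ M) x 1 = w + δ * act M x 1) (j : Fin 2) :
    |shearProduct N ℓ M 1 j| ≤ Q * (N 1 0 + |M 1 0| * ρ) + |M 1 0| * |δ| := by
  have hsR : (0 : ℝ) ≤ N 1 0 := by exact_mod_cast hs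
  have hentry {A c m z : ℝ} (h : (c - m * δ) * act M x 1 = A)
      (hA : |A| ≤ |N 1 0 * z| + |m * w|) (hz : |z| ≤ |x 1|) (hm : |m| ≤ |M 1 0|) :
      |c| ≤ Q * (N 1 0 + |M 1 0| * ρ) + |M 1 0| * |δ| := by
    have hAB : |A| ≤ (N 1 0 + |M 1 0| * ρ) * |x 1| := by
      calc |A| ≤ N 1 0 * |z| + |m| * |w| := by rwa [abs_mul, abs_mul, abs_of_nonneg hsR] at hA
        _ ≤ N 1 0 * |x 1| + |M 1 0| * |w| := by gcongr
        _ = (N 1 0 + |M 1 0| * ρ) * |x 1| := by rw [hρ]; ring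
    calc |c| ≤ Q * (N 1 0 + |M 1 0| * ρ) + |m * δ| := abs_le_of_sub_mul_eq hx1 hQ0 hQ h hAB
      _ ≤ Q * (N 1 0 + |M 1 0| * ρ) + |M 1 0| * |δ| := by rw [abs_mul]; gcongr
  fin_cases j
  · exact_mod_cast hentry (shearProduct_one_zero_sub_mul_act hM hw) (abs_add_le _ _) le_rfl
      (Int.cast_abs).ge
  · refine mod_cast hentry (shearProduct_one_one_sub_mul_act hM hw) ?_ hx (mod_cast hM1)
    rw [add_comm]
    exact abs_sub _ _

lemma abs_shearProduct_zero_le (hN : N.det = 1) (hs : 1 ≤ N 1 0) (ht : |N 0 0| ≤ N 1 0)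
    (j : Fin 2) :
    |shearProduct N ℓ M 0 j| ≤ |shearProduct N ℓ M 1 j| + |M 1 j| := by
  refine le_of_mul_le_mul_left ?_ (zero_lt_one.trans_le hs)
  calc N 1 0 * |shearProduct N ℓ M 0 j|
      = |N 0 0 * shearProduct N ℓ M 1 j - M 1 j| := by
        rw [← mul_shearProduct_zero hN, abs_mul, abs_of_nonneg (zero_le_one.trans hs)]
    _ ≤ |N 0 0| * |shearProduct N ℓ M 1 j| + |M 1 j| := by
        rw [← abs_mul]
        exact abs_sub _ _
    _ ≤ N 1 0 * |shearProduct N ℓ M 1 j| + N 1 0 * |M 1 j| := by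
        gcongr
        exact le_mul_of_one_le_left (abs_nonneg _) hs
    _ = N 1 0 * (|shearProduct N ℓ M 1 j| + |M 1 j|) := by ring

lemma sub_le_mnorm_shearProduct (hM : M.det = 1) (hs : 0 ≤ N 1 0) (hx1 : x 1 ≠ 0)
    (hq0 : 0 ≤ q) (hq : q * |act M x 1| ≤ |x 1|) (hρ : |w| = ρ * |x 1|)
    (hw : act (shearProduct N ℓ M) x 1 = w + δ * act M x 1) :
    q * |(|M 1 0| * ρ - N 1 0)| - |M 1 0| * |δ| ≤ mnorm (shearProduct N ℓ M) := by
  have hentry := sub_le_abs_shearProduct_one_zero hM hs hx1 hq0 hq hρ hw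
  rw [Int.cast_abs (a := shearProduct N ℓ M 1 0)] at hentry
  exact hentry.trans ((le_max_left _ _).trans (le_max_right _ _))

lemma mnorm_shearProduct_le (hN : N.det = 1) (hM : M.det = 1) (hs : 1 ≤ N 1 0)
    (ht : |N 0 0| ≤ N 1 0) (hM1 : |M 1 1| ≤ |M 1 0|) (hx1 : x 1 ≠ 0) (hx : |x 0| ≤ |x 1|)
    (hQ0 : 0 ≤ Q) (hQ : |x 1| ≤ Q * |act M x 1|) (hρ : |w| = ρ * |x 1|)
    (hw : act (shearProduct N ℓ M) x 1 = w + δ * act M x 1) :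
    mnorm (shearProduct N ℓ M) ≤ Q * (N 1 0 + |M 1 0| * ρ) + |M 1 0| * |δ| + |M 1 0| := by
  have hrow_one := abs_shearProduct_one_le hM (zero_le_one.trans hs) hx1 hx hM1 hQ0 hQ hρ hw
  have hM1j (j : Fin 2) : |M 1 j| ≤ |M 1 0| := by fin_cases j <;> simp [hM1]
  have hrow_zero (j : Fin 2) : (|shearProduct N ℓ M 0 j| : ℤ) ≤
      Q * (N 1 0 + |M 1 0| * ρ) + |M 1 0| * |δ| + |M 1 0| := by
    calc ((|shearProduct N ℓ M 0 j| : ℤ) : ℝ) ≤ |shearProduct N ℓ M 1 j| + |M 1 j| := by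
          exact_mod_cast abs_shearProduct_zero_le hN hs ht j
      _ ≤ _ := add_le_add (hrow_one j) (mod_cast hM1j j)
  have hnonneg : (0 : ℝ) ≤ |M 1 0| := by positivity
  simp only [mnorm, ← Int.cast_abs, max_le_iff]
  exact ⟨⟨hrow_zero 0, hrow_zero 1⟩, (hrow_one 0).trans (le_add_of_nonneg_right hnonneg),
    (hrow_one 1).trans (le_add_of_nonneg_right hnonneg)⟩

lemma abs_act_shearProduct_zero_sub_le (hN : N.det = 1) (hs : 1 ≤ N 1 0) (ht : |N 0 0| ≤ N 1 0)
    (hw : act (shearProduct N ℓ M) x 1 = y 1 + δ * act M x 1) :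
    |act (shearProduct N ℓ M) x 0 - y 0| ≤
      |N 1 0 * y 0 - N 0 0 * y 1| / N 1 0 + (|δ| + 1) * |act M x 1| := by
  have hsR : (1 : ℝ) ≤ N 1 0 := by exact_mod_cast hs
  have htR : |(N 0 0 : ℝ)| ≤ N 1 0 := by exact_mod_cast ht
  have hspos : (0 : ℝ) < N 1 0 := zero_lt_one.trans_le hsR
  refine le_of_mul_le_mul_left ?_ hspos
  calc N 1 0 * |act (shearProduct N ℓ M) x 0 - y 0|
      = |N 1 0 * act (shearProduct N ℓ M) x 0 - N 1 0 * y 0| := by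
        rw [← mul_sub, abs_mul, abs_of_pos hspos]
    _ = |N 0 0 * (δ * act M x 1) - (N 1 0 * y 0 - N 0 0 * y 1) - act M x 1| := by
        rw [mul_act_shearProduct_zero hN, hw]
        ring_nf
    _ ≤ |N 0 0 * (δ * act M x 1)| + |N 1 0 * y 0 - N 0 0 * y 1| + |act M x 1| :=
        (abs_sub _ _).trans (by gcongr; exact abs_sub _ _)
    _ ≤ N 1 0 * (|δ| * |act M x 1|) + |N 1 0 * y 0 - N 0 0 * y 1| + N 1 0 * |act M x 1| := by
        rw [abs_mul, abs_mul δ]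
        gcongr
        exact le_mul_of_one_le_left (abs_nonneg _) hsR
    _ = N 1 0 * (|N 1 0 * y 0 - N 0 0 * y 1| / N 1 0 + (|δ| + 1) * |act M x 1|) := by
        field_simp
        ring

lemma vnorm_act_shearProduct_sub_le (hN : N.det = 1) (hs : 1 ≤ N 1 0) (ht : |N 0 0| ≤ N 1 0)
    (hw : act (shearProduct N ℓ M) x 1 = y 1 + δ * act M x 1) :
    vnorm (act (shearProduct N ℓ M) x - y) ≤
      |N 1 0 * y 0 - N 0 0 * y 1| / N 1 0 + (|δ| + 1) * |act M x 1| := by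
  have hsR : (0 : ℝ) < N 1 0 := by exact_mod_cast zero_lt_one.trans_le hs
  refine max_le (abs_act_shearProduct_zero_sub_le hN hs ht hw) ?_
  calc |(act (shearProduct N ℓ M) x - y) 1| = |δ| * |act M x 1| := by
        rw [Pi.sub_apply, hw, add_sub_cancel_left, abs_mul]
    _ ≤ |N 1 0 * y 0 - N 0 0 * y 1| / N 1 0 + (|δ| + 1) * |act M x 1| := by
        rw [add_one_mul]
        linarith [abs_nonneg (act M x 1),
          div_nonneg (abs_nonneg (N 1 0 * y 0 - N 0 0 * y 1)) hsR.le]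

end ShearProduct

section ConvergentAction

open GenContFract (of)

variable {x : Fin 2 → ℝ} {p q : ℕ → ℤ} {n : ℕ}

lemma abs_convErrorMatrix_one_zero : |convErrorMatrix p q n 1 0| = |q n| := by
  simp [convErrorMatrix, abs_mul]

lemma abs_convErrorMatrix_one_one : |convErrorMatrix p q n 1 1| = |p n| := by
  simp [convErrorMatrix, abs_mul]

lemma abs_den_mul_sub_num_mul (hx1 : x 1 ≠ 0) (hp : ∀ n, (p n : ℝ) = (of (x 0 / x 1)).nums n)
    (hq : ∀ n, (q n : ℝ) = (of (x 0 / x 1)).dens n) :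
    |q n * x 0 - p n * x 1| = |x 1| * convError (x 0 / x 1) n := by
  rw [← abs_dens_mul_sub_nums, ← abs_mul, hp, hq]
  congr 1
  field_simp

lemma den_succ_mul_abs_den_mul_sub_num_mul_le (hx1 : x 1 ≠ 0)
    (hp : ∀ n, (p n : ℝ) = (of (x 0 / x 1)).nums n)
    (hq : ∀ n, (q n : ℝ) = (of (x 0 / x 1)).dens n) :
    q (n + 1) * |q n * x 0 - p n * x 1| ≤ |x 1| := by
  rw [abs_den_mul_sub_num_mul hx1 hp hq, hq, mul_left_comm]
  exact mul_le_of_le_one_right (abs_nonneg _) dens_succ_mul_convError_le_one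

lemma abs_le_den_add_mul_abs_den_mul_sub_num_mul (hx1 : x 1 ≠ 0)
    (hp : ∀ n, (p n : ℝ) = (of (x 0 / x 1)).nums n)
    (hq : ∀ n, (q n : ℝ) = (of (x 0 / x 1)).dens n) (hx : ¬(of (x 0 / x 1)).TerminatedAt n) :
    |x 1| ≤ (q (n + 1) + q n) * |q n * x 0 - p n * x 1| := by
  rw [abs_den_mul_sub_num_mul hx1 hp hq, hq, hq, mul_left_comm]
  exact le_mul_of_one_le_right (abs_nonneg _) (one_le_dens_add_mul_convError hx)

lemma abs_act_convErrorMatrix_one :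
    |act (convErrorMatrix p q n) x 1| = |q n * x 0 - p n * x 1| := by
  have hfactor : act (convErrorMatrix p q n) x 1 = (-1) ^ n * (q n * x 0 - p n * x 1) := by
    rw [act_apply]
    simp only [convErrorMatrix, Matrix.of_apply, Matrix.cons_val]
    push_cast
    ring
  rw [hfactor, abs_mul, abs_neg_one_pow, one_mul]

lemma act_convErrorMatrix_one_ne_zero (hx1 : x 1 ≠ 0)
    (hp : ∀ n, (p n : ℝ) = (of (x 0 / x 1)).nums n)
    (hq : ∀ n, (q n : ℝ) = (of (x 0 / x 1)).dens n) (hx : ¬(of (x 0 / x 1)).TerminatedAt n) :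
    act (convErrorMatrix p q n) x 1 ≠ 0 := by
  intro hzero
  have hle := abs_le_den_add_mul_abs_den_mul_sub_num_mul hx1 hp hq hx
  rw [← abs_act_convErrorMatrix_one, hzero, abs_zero, mul_zero] at hle
  exact hx1 (abs_nonpos_iff.1 hle)

lemma not_terminatedAt_of_irrational {v : ℝ} (hv : Irrational v) (n : ℕ) :
    ¬(of v).TerminatedAt n := by
  intro hterm
  obtain ⟨c, hc⟩ := GenContFract.exists_rat_eq_of_terminates ⟨n, hterm⟩
  exact hv ⟨c, hc.symm⟩

end ConvergentAction

section ConvergentProduct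

open GenContFract (of)

variable {x y : Fin 2 → ℝ} {p q t s : ℕ → ℤ} {m i : ℕ} {ℓ : ℤ} {δ : ℝ}

lemma sub_le_mnorm_shearProduct_convMatrix (hx1 : x 1 ≠ 0)
    (hp : ∀ n, (p n : ℝ) = (of (x 0 / x 1)).nums n)
    (hq : ∀ n, (q n : ℝ) = (of (x 0 / x 1)).dens n) (hx : ¬(of (x 0 / x 1)).TerminatedAt m)
    (hs : 1 ≤ s (i + 1)) (hδ : |δ| ≤ s (i + 1) / 2)
    (hw : act (shearProduct (convMatrix t s i) ℓ (convErrorMatrix p q m)) x 1 =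
      y 1 + δ * act (convErrorMatrix p q m) x 1) :
    |(|y 1| / |x 1|) * q m * q (m + 1) - s (i + 1) * q (m + 1)| - 4 * s (i + 1) * q m ≤
      mnorm (shearProduct (convMatrix t s i) ℓ (convErrorMatrix p q m)) := by
  have hq1 : (1 : ℝ) ≤ q m := by exact_mod_cast one_le_den hq
  have hq1' : (1 : ℝ) ≤ q (m + 1) := by exact_mod_cast one_le_den hq
  have hs1 : (1 : ℝ) ≤ s (i + 1) := by exact_mod_cast hs
  have hM : (convErrorMatrix p q m).det = 1 := det_convErrorMatrix hp hq hx
  have hE : q (m + 1) * |act (convErrorMatrix p q m) x 1| ≤ |x 1| := by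
    rw [abs_act_convErrorMatrix_one]
    exact den_succ_mul_abs_den_mul_sub_num_mul_le hx1 hp hq
  have hlower := sub_le_mnorm_shearProduct hM (N := convMatrix t s i) (zero_le_one.trans hs) hx1
    (by positivity) hE (div_mul_cancel₀ |y 1| (abs_ne_zero.2 hx1)).symm hw
  rw [abs_convErrorMatrix_one_zero, abs_of_nonneg (zero_le_one.trans (one_le_den hq))] at hlower
  refine le_trans (sub_le_sub (le_of_eq ?_) ?_) hlower
  · have hq_pos : (0 : ℝ) < q (m + 1) := zero_lt_one.trans_le hq1'
    rw [← abs_of_pos hq_pos, ← abs_mul, abs_of_pos hq_pos]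
    congr 1
    simp only [convMatrix, Matrix.of_apply, Matrix.cons_val]
    ring
  · calc q m * |δ| ≤ q m * (s (i + 1) / 2) := by gcongr
      _ ≤ 4 * s (i + 1) * q m := by nlinarith

lemma mnorm_shearProduct_convMatrix_le (hx1 : x 1 ≠ 0) (hxn : |x 0| ≤ |x 1|)
    (hp : ∀ n, (p n : ℝ) = (of (x 0 / x 1)).nums n)
    (hq : ∀ n, (q n : ℝ) = (of (x 0 / x 1)).dens n) (hx : ¬(of (x 0 / x 1)).TerminatedAt m)
    (hN : (convMatrix t s i).det = 1) (hs : 1 ≤ s (i + 1)) (ht : |t (i + 1)| ≤ s (i + 1))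
    (hδ : |δ| ≤ s (i + 1) / 2)
    (hw : act (shearProduct (convMatrix t s i) ℓ (convErrorMatrix p q m)) x 1 =
      y 1 + δ * act (convErrorMatrix p q m) x 1) :
    mnorm (shearProduct (convMatrix t s i) ℓ (convErrorMatrix p q m)) ≤
      2 * (|y 1| / |x 1|) * q m * q (m + 1) + 4 * s (i + 1) * q (m + 1) := by
  have hq1 : (1 : ℝ) ≤ q m := by exact_mod_cast one_le_den hq
  have hqle : (q m : ℝ) ≤ q (m + 1) := by exact_mod_cast den_le_succ hq
  have hs1 : (1 : ℝ) ≤ s (i + 1) := by exact_mod_cast hs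
  have hM : (convErrorMatrix p q m).det = 1 := det_convErrorMatrix hp hq hx
  have hM10 : |convErrorMatrix p q m 1 0| = q m := by
    rw [abs_convErrorMatrix_one_zero, abs_of_nonneg (zero_le_one.trans (one_le_den hq))]
  have hM11 : |convErrorMatrix p q m 1 1| ≤ |convErrorMatrix p q m 1 0| := by
    rw [hM10, abs_convErrorMatrix_one_one]
    exact abs_num_le_den hp hq ((abs_div _ _).trans_le (div_le_one_of_le₀ hxn (abs_nonneg _)))
  have hE : |x 1| ≤ (q (m + 1) + q m) * |act (convErrorMatrix p q m) x 1| := by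
    rw [abs_act_convErrorMatrix_one]
    exact abs_le_den_add_mul_abs_den_mul_sub_num_mul hx1 hp hq hx
  have hupper := mnorm_shearProduct_le hN hM hs ht hM11 hx1 hxn (by linarith) hE
    (div_mul_cancel₀ |y 1| (abs_ne_zero.2 hx1)).symm hw
  have hN10 : convMatrix t s i 1 0 = s (i + 1) := rfl
  rw [hM10, hN10] at hupper
  have hqρ : q m * (q m * (|y 1| / |x 1|)) ≤ q (m + 1) * (q m * (|y 1| / |x 1|)) := by gcongr
  have hqs : q m * s (i + 1) ≤ (q (m + 1) * s (i + 1) : ℝ) := by gcongr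
  have hqδ : q m * |δ| ≤ q m * (s (i + 1) / 2) := by gcongr
  have hq_le : (q m : ℝ) ≤ q m * s (i + 1) := le_mul_of_one_le_right (by linarith) hs1
  calc mnorm (shearProduct (convMatrix t s i) ℓ (convErrorMatrix p q m))
      ≤ (q (m + 1) + q m) * (s (i + 1) + q m * (|y 1| / |x 1|)) + q m * |δ| + q m := hupper
    _ ≤ 2 * (|y 1| / |x 1|) * q m * q (m + 1) + 4 * s (i + 1) * q (m + 1) := by linarith

lemma vnorm_act_shearProduct_convMatrix_sub_le (hx1 : x 1 ≠ 0) (hy1 : y 1 ≠ 0)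
    (hp : ∀ n, (p n : ℝ) = (of (x 0 / x 1)).nums n)
    (hq : ∀ n, (q n : ℝ) = (of (x 0 / x 1)).dens n)
    (ht : ∀ n, (t n : ℝ) = (of (y 0 / y 1)).nums n)
    (hs : ∀ n, (s n : ℝ) = (of (y 0 / y 1)).dens n)
    (hN : (convMatrix t s i).det = 1) (hts : |t (i + 1)| ≤ s (i + 1))
    (hδ : |δ| ≤ s (i + 1) / 2)
    (hw : act (shearProduct (convMatrix t s i) ℓ (convErrorMatrix p q m)) x 1 =
      y 1 + δ * act (convErrorMatrix p q m) x 1) :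
    vnorm (act (shearProduct (convMatrix t s i) ℓ (convErrorMatrix p q m)) x - y) ≤
      2 * |y 1| / (s (i + 1) * s (i + 2)) + 5 * |x 1| * s (i + 1) / q (m + 1) := by
  have hq1 : (1 : ℝ) ≤ q (m + 1) := by exact_mod_cast one_le_den hq
  have hs1 (n : ℕ) : (1 : ℝ) ≤ s n := by exact_mod_cast one_le_den hs
  have hs_pos (n : ℕ) : (0 : ℝ) < s n := zero_lt_one.trans_le (hs1 n)
  have hE : |act (convErrorMatrix p q m) x 1| ≤ |x 1| / q (m + 1) := by
    rw [abs_act_convErrorMatrix_one, le_div_iff₀' (zero_lt_one.trans_le hq1)]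
    exact den_succ_mul_abs_den_mul_sub_num_mul_le hx1 hp hq
  have hy_err : |s (i + 1) * y 0 - t (i + 1) * y 1| ≤ |y 1| / s (i + 2) := by
    rw [le_div_iff₀' (hs_pos _)]
    exact den_succ_mul_abs_den_mul_sub_num_mul_le hy1 ht hs
  have hδ5 : |δ| + 1 ≤ 5 * s (i + 1) := by linarith [hs1 (i + 1)]
  have hs_pos_succ : (0 : ℝ) < s (i + 1) * s (i + 2) := mul_pos (hs_pos _) (hs_pos _)
  calc vnorm (act (shearProduct (convMatrix t s i) ℓ (convErrorMatrix p q m)) x - y)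
      ≤ |s (i + 1) * y 0 - t (i + 1) * y 1| / s (i + 1) +
          (|δ| + 1) * |act (convErrorMatrix p q m) x 1| :=
        vnorm_act_shearProduct_sub_le hN (one_le_den hs) hts hw
    _ ≤ |y 1| / s (i + 2) / s (i + 1) + 5 * s (i + 1) * (|x 1| / q (m + 1)) := by
        gcongr
        · exact (hs_pos _).le
        · exact (by positivity : (0 : ℝ) ≤ |δ| + 1).trans hδ5
    _ = |y 1| / (s (i + 1) * s (i + 2)) + 5 * |x 1| * s (i + 1) / q (m + 1) := by
        rw [div_div, mul_comm (s (i + 2) : ℝ)]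
        ring
    _ ≤ 2 * |y 1| / (s (i + 1) * s (i + 2)) + 5 * |x 1| * s (i + 1) / q (m + 1) := by
        gcongr
        exact le_mul_of_one_le_left (abs_nonneg _) one_le_two

end ConvergentProduct

theorem stmt13_general (x y : Fin 2 → ℝ) (hx2 : x 1 ≠ 0) (hy2 : y 1 ≠ 0) (j k : ℕ) (hj : 1 ≤ j)
    (hk : 1 ≤ k) (hξt : ¬(GenContFract.of (x 0 / x 1)).TerminatedAt (k - 1)) (hxn : |x 0| ≤ |x 1|)
    (hyt : ¬(GenContFract.of (y 0 / y 1)).TerminatedAt (j - 1)) (hyn : |y 0| ≤ |y 1|)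
    (p q : ℕ → ℤ) (hp : ∀ k, (p k : ℝ) = pnum (x 0 / x 1) k)
    (hq : ∀ k, (q k : ℝ) = qden (x 0 / x 1) k)
    (t s : ℕ → ℤ) (ht : ∀ j, (t j : ℝ) = pnum (y 0 / y 1) j)
    (hs : ∀ j, (s j : ℝ) = qden (y 0 / y 1) j) :
    ∃ ℓ : ℤ, ∃ γ : Matrix (Fin 2) (Fin 2) ℤ,
      γ = !![t j, (-1) ^ (j - 1) * t (j - 1); s j, (-1) ^ (j - 1) * s (j - 1)] *
          !![1, ℓ; 0, 1] *
          (if Even k then !![q k, -(p k); -(q (k - 1)), p (k - 1)]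
            else !![q k, -(p k); q (k - 1), -(p (k - 1))]) ∧
        |(|y 1| / |x 1|) * (q (k - 1) : ℝ) * (q k : ℝ) - (s j : ℝ) * (q k : ℝ)|
            - 4 * (s j : ℝ) * (q (k - 1) : ℝ) ≤ mnorm γ ∧
        mnorm γ ≤ 2 * (|y 1| / |x 1|) * (q (k - 1) : ℝ) * (q k : ℝ)
            + 4 * (s j : ℝ) * (q k : ℝ) ∧
        vnorm (act γ x - y) ≤ 2 * |y 1| / ((s j : ℝ) * (s (j + 1) : ℝ))
            + 5 * |x 1| * (s j : ℝ) / (q k : ℝ) := by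
  obtain ⟨i, rfl⟩ := Nat.exists_eq_add_of_le' hj
  obtain ⟨m, rfl⟩ := Nat.exists_eq_add_of_le' hk
  simp only [Nat.add_sub_cancel] at hξt hyt ⊢
  have hN : (convMatrix t s i).det = 1 := det_convMatrix ht hs hyt
  have hs1 : 1 ≤ s (i + 1) := one_le_den hs
  have hts : |t (i + 1)| ≤ s (i + 1) :=
    abs_num_le_den ht hs ((abs_div _ _).trans_le (div_le_one_of_le₀ hyn (abs_nonneg _)))
  obtain ⟨ℓ, δ, hδ, hw⟩ := exists_act_shearProduct_one_eq (N := convMatrix t s i)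
    (zero_lt_one.trans_le hs1) (act_convErrorMatrix_one_ne_zero hx2 hp hq hξt) (y 1)
  exact ⟨ℓ, shearProduct (convMatrix t s i) ℓ (convErrorMatrix p q m),
    by rw [← convErrorMatrix_eq_ite]; rfl,
    sub_le_mnorm_shearProduct_convMatrix hx2 hp hq hξt hs1 hδ hw,
    mnorm_shearProduct_convMatrix_le hx2 hxn hp hq hξt hN hs1 hts hδ hw,
    vnorm_act_shearProduct_convMatrix_sub_le hx2 hy2 hp hq ht hs hN hts hδ hw⟩

/-- Lemma 4: for all `j, k ≥ 1` there is `γ = N_j U^ℓ M_k ∈ SL(2, ℤ)` with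
`| (|y₂|/|x₂|) q_{k-1} q_k - s_j q_k | - 4 s_j q_{k-1} ≤ |γ| ≤ 2 (|y₂|/|x₂|) q_{k-1} q_k + 4 s_j q_k`
and `|γ x - y| ≤ 2|y₂|/(s_j s_{j+1}) + 5 |x₂| s_j / q_k`. -/
theorem stmt13 (x y : Fin 2 → ℝ) (hx2 : x 1 ≠ 0) (hy2 : y 1 ≠ 0)
    (hξ : Irrational (x 0 / x 1)) (hξ1 : |x 0 / x 1| < 1) (hxn : |x 0| ≤ |x 1|)
    (hyirr : Irrational (y 0 / y 1)) (hy1 : |y 0 / y 1| ≤ 1) (hyn : |y 0| ≤ |y 1|)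
    (p q : ℕ → ℤ) (hp : ∀ k, (p k : ℝ) = pnum (x 0 / x 1) k)
    (hq : ∀ k, (q k : ℝ) = qden (x 0 / x 1) k)
    (t s : ℕ → ℤ) (ht : ∀ j, (t j : ℝ) = pnum (y 0 / y 1) j)
    (hs : ∀ j, (s j : ℝ) = qden (y 0 / y 1) j)
    (j k : ℕ) (hj : 1 ≤ j) (hk : 1 ≤ k) :
    ∃ ℓ : ℤ, ∃ γ : Matrix (Fin 2) (Fin 2) ℤ,
      γ = !![t j, (-1) ^ (j - 1) * t (j - 1); s j, (-1) ^ (j - 1) * s (j - 1)] *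
          !![1, ℓ; 0, 1] *
          (if Even k then !![q k, -(p k); -(q (k - 1)), p (k - 1)]
            else !![q k, -(p k); q (k - 1), -(p (k - 1))]) ∧
        |(|y 1| / |x 1|) * (q (k - 1) : ℝ) * (q k : ℝ) - (s j : ℝ) * (q k : ℝ)|
            - 4 * (s j : ℝ) * (q (k - 1) : ℝ) ≤ mnorm γ ∧
        mnorm γ ≤ 2 * (|y 1| / |x 1|) * (q (k - 1) : ℝ) * (q k : ℝ)
            + 4 * (s j : ℝ) * (q k : ℝ) ∧
        vnorm (act γ x - y) ≤ 2 * |y 1| / ((s j : ℝ) * (s (j + 1) : ℝ))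
            + 5 * |x 1| * (s j : ℝ) / (q k : ℝ) :=
  stmt13_general x y hx2 hy2 j k hj hk (not_terminatedAt_of_irrational hξ _) hxn
    (not_terminatedAt_of_irrational hyirr _) hyn p q hp hq t s ht hs
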